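/- arXiv:0808.1860 — 2 statements merged into one kernel-verified Lean document; each statement's English description precedes it below -/
import Mathlib

section
/- Let V be a variety with 0⃗ & 1⃗. If V has the Weak Determining Property, then V has Boolean Factor Congruences. -/
open FirstOrder Language

universe u v w

namespace Paper

variable {L : FirstOrder.Language.{v, w}}

/-- The direct product of two `L`-structures, with pointwise operations. -/
instance prodStructure (A : Type*) (B : Type*) [L.Structure A] [L.Structure B] :
    L.Structure (A × B) where
  funMap f x := (Structure.funMap f fun i => (x i).1, Structure.funMap f fun i => (x i).2)
  RelMap r x := Structure.RelMap r (fun i => (x i).1) ∧ Structure.RelMap r fun i => (x i).2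

/-- The interpretation of a closed term in an algebra. -/
def interp (A : Type u) [L.Structure A] (t : L.Term Empty) : A := t.realize Empty.elim

/-- A congruence of an `L`-structure: an equivalence relation compatible with all
basic operations. -/
structure Congruence (L : FirstOrder.Language.{v, w}) (A : Type u) [L.Structure A] where
  rel : A → A → Prop
  refl : ∀ a, rel a a
  symm : ∀ {a b}, rel a b → rel b a
  trans : ∀ {a b c}, rel a b → rel b c → rel a c
  compat : ∀ {n} (f : L.Functions n) (x y : Fin n → A),
    (∀ i, rel (x i) (y i)) → rel (Structure.funMap f x) (Structure.funMap f y)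

variable {A : Type u} [L.Structure A]

/-- `θ ⋄ θ* = Δ` : `θ ∩ θ* = Δ` and `θ ∘ θ* = ∇`. -/
def Complementary (θ θ' : Congruence L A) : Prop :=
  (∀ a b : A, θ.rel a b → θ'.rel a b → a = b) ∧ ∀ a b : A, ∃ c : A, θ.rel a c ∧ θ'.rel c b

/-- A factor congruence: the kernel of a projection onto a direct factor,
equivalently a congruence possessing a complementary factor congruence. -/
def IsFactorCongruence (θ : Congruence L A) : Prop := ∃ θ' : Congruence L A, Complementary θ θ'

/-- The meet of two congruences. -/
def Congruence.inf (θ φ : Congruence L A) : Congruence L A where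
  rel a b := θ.rel a b ∧ φ.rel a b
  refl a := ⟨θ.refl a, φ.refl a⟩
  symm h := ⟨θ.symm h.1, φ.symm h.2⟩
  trans h h' := ⟨θ.trans h.1 h'.1, φ.trans h.2 h'.2⟩
  compat f x y h := ⟨θ.compat f x y fun i => (h i).1, φ.compat f x y fun i => (h i).2⟩

/-- The order on congruences. -/
def Congruence.le (θ φ : Congruence L A) : Prop := ∀ a b : A, θ.rel a b → φ.rel a b

/-- The join of two congruences in the congruence lattice. -/
def Congruence.sup (θ φ : Congruence L A) : Congruence L A where
  rel a b := ∀ ψ : Congruence L A, θ.le ψ → φ.le ψ → ψ.rel a b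
  refl a ψ _ _ := ψ.refl a
  symm h ψ h1 h2 := ψ.symm (h ψ h1 h2)
  trans h h' ψ h1 h2 := ψ.trans (h ψ h1 h2) (h' ψ h1 h2)
  compat f x y h ψ h1 h2 := ψ.compat f x y fun i => h i ψ h1 h2

/-- A theory is equational when each axiom is a universally quantified equation. -/
def IsEquational (T : L.Theory) : Prop :=
  ∀ φ ∈ T, ∃ (n : ℕ) (t₁ t₂ : L.Term (Empty ⊕ Fin n)), φ = (t₁.bdEqual t₂).alls

/-- `Mod(T)` is a variety with `0⃗` & `1⃗`, witnessed by closed terms `z`, `o`. -/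
def HasZeroOne (T : L.Theory) {l : ℕ} (z o : Fin l → L.Term Empty) : Prop :=
  ∀ (A : Type u) [L.Structure A], A ⊨ T → Nonempty A →
    (∀ i, interp A (z i) = interp A (o i)) → ∀ x y : A, x = y

variable {l : ℕ} (z o : Fin l → L.Term Empty)

/-- `0⃗ θ e⃗ θ* 1⃗`. -/
def Between (θ θ' : Congruence L A) (e : Fin l → A) : Prop :=
  (∀ i, θ.rel (interp A (z i)) (e i)) ∧ ∀ i, θ'.rel (e i) (interp A (o i))

/-- `e⃗` is a central element of `A`. -/
def IsCentral (e : Fin l → A) : Prop :=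
  ∃ (A₁ : Type u) (A₂ : Type u) (_ : L.Structure A₁) (_ : L.Structure A₂)
    (g : A ≃[L] A₁ × A₂), ∀ i, g (e i) = (interp A₁ (z i), interp A₂ (o i))

/-- `e⃗` and `f⃗` are complementary central elements of `A`. -/
def AreComplementaryCentral (e f : Fin l → A) : Prop :=
  ∃ (A₁ : Type u) (A₂ : Type u) (_ : L.Structure A₁) (_ : L.Structure A₂)
    (g : A ≃[L] A₁ × A₂),
      (∀ i, g (e i) = (interp A₁ (z i), interp A₂ (o i))) ∧
      (∀ i, g (f i) = (interp A₁ (o i), interp A₂ (z i)))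

variable (T : L.Theory)

/-- The Determining Property. -/
def HasDeterminingProperty : Prop :=
  ∀ (A : Type u) [L.Structure A], A ⊨ T → Nonempty A →
    (∀ θ θ' : Congruence L A, Complementary θ θ' → ∃! e : Fin l → A, Between z o θ θ' e) ∧
    (∀ (θ θ' : Congruence L A) (e : Fin l → A), Complementary θ θ' → Between z o θ θ' e →
      IsCentral z o e) ∧
    (∀ e : Fin l → A, IsCentral z o e →
      ∃! p : Congruence L A × Congruence L A, Complementary p.1 p.2 ∧ Between z o p.1 p.2 e)

/-- The Weak Determining Property. -/
def HasWeakDeterminingProperty : Prop :=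
  ∀ (A : Type u) [L.Structure A], A ⊨ T → Nonempty A →
    (∀ θ θ' : Congruence L A, Complementary θ θ' →
      ∃! p : (Fin l → A) × (Fin l → A), Between z o θ θ' p.1 ∧ Between o z θ θ' p.2) ∧
    (∀ (θ θ' : Congruence L A) (e f : Fin l → A), Complementary θ θ' →
      Between z o θ θ' e → Between o z θ θ' f → AreComplementaryCentral z o e f) ∧
    (∀ e f : Fin l → A, AreComplementaryCentral z o e f →
      ∃! p : Congruence L A × Congruence L A,
        Complementary p.1 p.2 ∧ Between z o p.1 p.2 e ∧ Between o z p.1 p.2 f)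

/-- Definable Factor Congruences. -/
def HasDFC : Prop :=
  ∃ Φ : L.Formula (Fin 2 ⊕ Fin l),
    ∀ (A : Type u) (B : Type u) [L.Structure A] [L.Structure B],
      A ⊨ T → B ⊨ T → Nonempty A → Nonempty B →
        ∀ (a c : A) (b d : B),
          Φ.Realize (Sum.elim (![((a, b) : A × B), (c, d)])
            fun i => ((interp A (z i), interp B (o i)) : A × B)) ↔ a = c

/-- Definability with both `[0⃗,1⃗]` and `[1⃗,0⃗]` as parameters. -/
def HasDFC' : Prop :=
  ∃ Φ : L.Formula (Fin 2 ⊕ (Fin l ⊕ Fin l)),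
    ∀ (A : Type u) (B : Type u) [L.Structure A] [L.Structure B],
      A ⊨ T → B ⊨ T → Nonempty A → Nonempty B →
        ∀ (a c : A) (b d : B),
          Φ.Realize (Sum.elim (![((a, b) : A × B), (c, d)])
            (Sum.elim (fun i => ((interp A (z i), interp B (o i)) : A × B))
              fun i => ((interp A (o i), interp B (z i)) : A × B))) ↔ a = c

/-- Boolean Factor Congruences. -/
def HasBFC : Prop :=
  ∀ (A : Type u) [L.Structure A], A ⊨ T → Nonempty A →
    (∀ θ φ : Congruence L A, IsFactorCongruence θ → IsFactorCongruence φ →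
      IsFactorCongruence (θ.inf φ) ∧ IsFactorCongruence (θ.sup φ)) ∧
    (∀ θ φ ψ : Congruence L A, IsFactorCongruence θ → IsFactorCongruence φ →
      IsFactorCongruence ψ →
        (θ.inf (φ.sup ψ)).rel = ((θ.inf φ).sup (θ.inf ψ)).rel)

end Paper

namespace Paper

variable {L : FirstOrder.Language.{v, w}} {A : Type u} [L.Structure A]

lemma realize_prod {α : Type*} (t : L.Term α) (x : α → A × A) :
    t.realize x = (t.realize fun i => (x i).1, t.realize fun i => (x i).2) := by
  induction t with
  | var i => rfl
  | func f ts ih =>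
    simp only [Term.realize, ih]
    rfl

lemma interp_prod (t : L.Term Empty) : interp (A × A) t = (interp A t, interp A t) := by
  unfold interp
  rw [realize_prod]
  congr 2 <;> exact Subsingleton.elim _ _

lemma model_prod {T : L.Theory} (hT : IsEquational T) (hA : A ⊨ T) : (A × A) ⊨ T := by
  refine ⟨fun φ hφ => ?_⟩
  have h := hA.realize_of_mem φ hφ
  obtain ⟨n, t₁, t₂, rfl⟩ := hT φ hφ
  simp only [Sentence.Realize, BoundedFormula.realize_alls,
    BoundedFormula.realize_bdEqual] at h ⊢
  intro xs
  rw [realize_prod, realize_prod]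
  have key : ∀ g : A × A → A, (fun i => g (Sum.elim (default : Empty → A × A) xs i)) =
      Sum.elim (default : Empty → A) (fun i => g (xs i)) := by
    intro g
    funext i
    rcases i with i | i
    · exact i.elim
    · rfl
  rw [key Prod.fst, key Prod.snd, h, h]

/-- Pull back a congruence on `A` to `A × A` along a pair of compatible binary maps. -/
def pull (φ : Congruence L A) (d d' : A → A → A)
    (h : ∀ {n} (f : L.Functions n) (x y : Fin n → A),
      d (Structure.funMap f x) (Structure.funMap f y) = Structure.funMap f fun i => d (x i) (y i))
    (h' : ∀ {n} (f : L.Functions n) (x y : Fin n → A),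
      d' (Structure.funMap f x) (Structure.funMap f y) =
        Structure.funMap f fun i => d' (x i) (y i)) :
    Congruence L (A × A) where
  rel p q := φ.rel (d p.1 p.2) (d q.1 q.2) ∧ φ.rel (d' p.1 p.2) (d' q.1 q.2)
  refl p := ⟨φ.refl _, φ.refl _⟩
  symm h := ⟨φ.symm h.1, φ.symm h.2⟩
  trans h h' := ⟨φ.trans h.1 h'.1, φ.trans h.2 h'.2⟩
  compat f x y hxy := by
    refine ⟨?_, ?_⟩
    · change φ.rel (d (Structure.funMap f _) (Structure.funMap f _))
        (d (Structure.funMap f _) (Structure.funMap f _))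
      rw [h, h]
      exact φ.compat f _ _ fun i => (hxy i).1
    · change φ.rel (d' (Structure.funMap f _) (Structure.funMap f _))
        (d' (Structure.funMap f _) (Structure.funMap f _))
      rw [h', h']
      exact φ.compat f _ _ fun i => (hxy i).2

lemma Complementary.symm {θ θ' : Congruence L A} (h : Complementary θ θ') :
    Complementary θ' θ := by
  refine ⟨fun a b h1 h2 => h.1 a b h2 h1, fun a b => ?_⟩
  obtain ⟨c, h1, h2⟩ := h.2 b a
  exact ⟨c, θ'.symm h2, θ.symm h1⟩

lemma Complementary.uniq {θ θ' : Congruence L A} (h : Complementary θ θ') {x y c c' : A}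
    (h1 : θ.rel x c) (h2 : θ'.rel c y) (h3 : θ.rel x c') (h4 : θ'.rel c' y) : c = c' :=
  h.1 _ _ (θ.trans (θ.symm h1) h3) (θ'.trans h2 (θ'.symm h4))

/-- The Weak Determining Property: a pair of complementary factor congruences is determined by
the associated pair of complementary central elements. -/
lemma wdp_unique {T : L.Theory} {l : ℕ} {z o : Fin l → L.Term Empty}
    (hW : HasWeakDeterminingProperty.{u} z o T) (hA : A ⊨ T) (hne : Nonempty A)
    {θ θ' φ φ' : Congruence L A} {e f : Fin l → A}
    (hθ : Complementary θ θ') (hφ : Complementary φ φ')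
    (h1 : Between z o θ θ' e) (h2 : Between o z θ θ' f)
    (h3 : Between z o φ φ' e) (h4 : Between o z φ φ' f) : θ = φ := by
  obtain ⟨-, hc, hu⟩ := hW A hA hne
  have := (hu e f (hc θ θ' e f hθ h1 h2)).unique (y₁ := (θ, θ')) (y₂ := (φ, φ'))
    ⟨hθ, h1, h2⟩ ⟨hφ, h3, h4⟩
  exact congrArg Prod.fst this

/-- The key fact: decomposition operations preserve factor congruences. -/
lemma key {T : L.Theory} (hT : IsEquational T) {l : ℕ} {z o : Fin l → L.Term Empty}
    (hW : HasWeakDeterminingProperty.{u} z o T) (hA : A ⊨ T)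
    {θ θ' φ φ' : Congruence L A}
    (hθ : Complementary θ θ') (hφ : Complementary φ φ') {x y c x' y' c' : A}
    (h1 : θ.rel x c) (h2 : θ'.rel c y) (h3 : θ.rel x' c') (h4 : θ'.rel c' y')
    (hx : φ.rel x x') (hy : φ.rel y y') : φ.rel c c' := by
  choose d hd hd' using hθ.2
  have du : ∀ {x y c : A}, θ.rel x c → θ'.rel c y → d x y = c :=
    fun h h' => hθ.uniq (hd _ _) (hd' _ _) h h'
  have dc : ∀ {n} (f : L.Functions n) (x y : Fin n → A),
      d (Structure.funMap f x) (Structure.funMap f y) =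
        Structure.funMap f fun i => d (x i) (y i) :=
    fun f x y => du (θ.compat f _ _ fun i => hd _ _) (θ'.compat f _ _ fun i => hd' _ _)
  have dd : ∀ x, d x x = x := fun x => du (θ.refl x) (θ'.refl x)
  have ds : ∀ x y, d (d x y) (d y x) = x :=
    fun x y => du (θ.symm (hd _ _)) (θ'.symm (hd' _ _))
  let P : Congruence L A → Congruence L (A × A) := fun φ =>
    pull φ (fun a _ => a) (fun _ b => b) (fun _ _ _ => rfl) (fun _ _ _ => rfl)
  let Q : Congruence L A → Congruence L (A × A) := fun φ =>
    pull φ d (fun a b => d b a) dc (fun f x y => dc f y x)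
  have hP : Complementary (P φ) (P φ') := by
    refine ⟨fun a b h h' => Prod.ext (hφ.1 _ _ h.1 h'.1) (hφ.1 _ _ h.2 h'.2), fun a b => ?_⟩
    obtain ⟨c, h1, h2⟩ := hφ.2 a.1 b.1
    obtain ⟨c', h1', h2'⟩ := hφ.2 a.2 b.2
    exact ⟨(c, c'), ⟨h1, h1'⟩, ⟨h2, h2'⟩⟩
  have hQ : Complementary (Q φ) (Q φ') := by
    refine ⟨fun a b h h' => ?_, fun a b => ?_⟩
    · have e1 : d a.1 a.2 = d b.1 b.2 := hφ.1 _ _ h.1 h'.1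
      have e2 : d a.2 a.1 = d b.2 b.1 := hφ.1 _ _ h.2 h'.2
      refine Prod.ext ?_ ?_
      · rw [← ds a.1 a.2, e1, e2, ds]
      · rw [← ds a.2 a.1, e1, e2, ds]
    · obtain ⟨c, h1, h2⟩ := hφ.2 (d a.1 a.2) (d b.1 b.2)
      obtain ⟨c', h1', h2'⟩ := hφ.2 (d a.2 a.1) (d b.2 b.1)
      refine ⟨(d c c', d c' c), ⟨?_, ?_⟩, ⟨?_, ?_⟩⟩ <;> simpa only [ds]
  have hbP : ∀ (z o : Fin l → L.Term Empty) (e : Fin l → A), Between z o φ φ' e →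
      Between z o (P φ) (P φ') (fun i => (e i, e i)) := by
    intro z o e h
    refine ⟨fun i => ?_, fun i => ?_⟩
    · rw [interp_prod]; exact ⟨h.1 i, h.1 i⟩
    · rw [interp_prod]; exact ⟨h.2 i, h.2 i⟩
  have hbQ : ∀ (z o : Fin l → L.Term Empty) (e : Fin l → A), Between z o φ φ' e →
      Between z o (Q φ) (Q φ') (fun i => (e i, e i)) := by
    intro z o e h
    refine ⟨fun i => ?_, fun i => ?_⟩
    · rw [interp_prod]; constructor <;> simpa only [dd] using h.1 i
    · rw [interp_prod]; constructor <;> simpa only [dd] using h.2 i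
  have hb : ∀ (z o : Fin l → L.Term Empty), ∃ e : Fin l → A, Between z o φ φ' e := by
    intro z o
    choose e h h' using fun i => hφ.2 (interp A (z i)) (interp A (o i))
    exact ⟨e, h, h'⟩
  obtain ⟨e, he⟩ := hb z o
  obtain ⟨f, hf⟩ := hb o z
  have hPQ : P φ = Q φ := wdp_unique hW (model_prod hT hA) ⟨(x, x)⟩ hP hQ
    (hbP _ _ _ he) (hbP _ _ _ hf) (hbQ _ _ _ he) (hbQ _ _ _ hf)
  have hrel : (P φ).rel (x, y) (x', y') := ⟨hx, hy⟩
  rw [hPQ] at hrel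
  have := hrel.1
  rw [← du h1 h2, ← du h3 h4]
  exact this

/-- Any two factor congruences permute, so their join is their composition. -/
lemma sup_rel {T : L.Theory} (hT : IsEquational T) {l : ℕ} {z o : Fin l → L.Term Empty}
    (hW : HasWeakDeterminingProperty.{u} z o T) (hA : A ⊨ T)
    {θ θ' φ φ' : Congruence L A}
    (hθ : Complementary θ θ') (hφ : Complementary φ φ') {a b : A}
    (h : (θ.sup φ).rel a b) : ∃ c, θ.rel a c ∧ φ.rel c b := by
  have perm : ∀ {a b c : A}, φ.rel a b → θ.rel b c → ∃ u, θ.rel a u ∧ φ.rel u c := by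
    intro a b c h1 h2
    obtain ⟨u, hu, hu'⟩ := hθ.2 a c
    exact ⟨u, hu, key hT hW hA hθ hφ hu hu' h2 (θ'.refl c) h1 (φ.refl c)⟩
  let ψ : Congruence L A :=
    { rel := fun a b => ∃ c, θ.rel a c ∧ φ.rel c b
      refl := fun a => ⟨a, θ.refl a, φ.refl a⟩
      symm := fun ⟨c, h1, h2⟩ => perm (φ.symm h2) (θ.symm h1)
      trans := fun ⟨c, h1, h2⟩ ⟨c', h1', h2'⟩ => by
        obtain ⟨u, hu, hu'⟩ := perm h2 h1'
        exact ⟨u, θ.trans h1 hu, φ.trans hu' h2'⟩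
      compat := fun f x y h => by
        choose c h1 h2 using h
        exact ⟨_, θ.compat f _ _ h1, φ.compat f _ _ h2⟩ }
  exact h ψ (fun a b h => ⟨b, h, φ.refl b⟩) (fun a b h => ⟨a, θ.refl a, h⟩)

lemma inf_compl {T : L.Theory} (hT : IsEquational T) {l : ℕ} {z o : Fin l → L.Term Empty}
    (hW : HasWeakDeterminingProperty.{u} z o T) (hA : A ⊨ T)
    {θ θ' φ φ' : Congruence L A}
    (hθ : Complementary θ θ') (hφ : Complementary φ φ') :
    Complementary (θ.inf φ) (θ'.sup φ') := by
  refine ⟨fun a b h h' => ?_, fun a b => ?_⟩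
  · obtain ⟨u, h1, h2⟩ := sup_rel hT hW hA hθ.symm hφ.symm h'
    exact hθ.1 a b h.1 (key hT hW hA hφ hθ.symm (x := b) (y := a) (x' := b) (y' := u)
      (φ.symm h.2) (φ'.refl a) (φ.refl b) (φ'.symm h2) (θ'.refl b) h1)
  · obtain ⟨c, h1, h2⟩ := hθ.2 a b
    obtain ⟨u, h3, h4⟩ := hφ.2 a c
    have h5 : θ.rel a u := key hT hW hA hφ hθ (φ.refl a) (φ'.refl a) h3 h4 (θ.refl a) h1
    exact ⟨u, ⟨h5, h3⟩, fun ψ k1 k2 => ψ.trans (k2 _ _ h4) (k1 _ _ h2)⟩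

end Paper

/-- **Theorem (1)⇒(5) of the Main Theorem.** If a variety with `0⃗` & `1⃗` has the
Weak Determining Property then it has Boolean Factor Congruences. -/
theorem weakDeterminingProperty_hasBFC {L : FirstOrder.Language.{v, w}}
    (T : L.Theory) (hT : Paper.IsEquational T) {l : ℕ} (z o : Fin l → L.Term Empty)
    (h01 : Paper.HasZeroOne.{u} T z o)
    (hW : Paper.HasWeakDeterminingProperty.{u} z o T) :
    Paper.HasBFC.{u} T := by
  intro A _ hA _
  refine ⟨?_, ?_⟩
  · rintro θ φ ⟨θ', hθ⟩ ⟨φ', hφ⟩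
    exact ⟨⟨_, Paper.inf_compl hT hW hA hθ hφ⟩,
      ⟨_, (Paper.inf_compl hT hW hA hθ.symm hφ.symm).symm⟩⟩
  · rintro θ φ ψ ⟨θ', hθ⟩ ⟨φ', hφ⟩ ⟨ψ', hψ⟩
    funext a b
    apply propext
    constructor
    · rintro ⟨h1, h2⟩
      obtain ⟨u, h3, h4⟩ := Paper.sup_rel hT hW hA hφ hψ h2
      obtain ⟨v, h5, h6⟩ := hθ.2 a u
      have h7 : φ.rel a v :=
        Paper.key hT hW hA hθ hφ (θ.refl a) (θ'.refl a) h5 h6 (φ.refl a) h3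
      have h8 : ψ.rel v b :=
        Paper.key hT hW hA hθ hψ h5 h6 h1 (θ'.refl b) (ψ.refl a) h4
      intro χ k1 k2
      exact χ.trans (k1 _ _ ⟨h5, h7⟩) (k2 _ _ ⟨θ.trans (θ.symm h5) h1, h8⟩)
    · intro h
      exact h (θ.inf (φ.sup ψ))
        (fun x y hxy => ⟨hxy.1, fun χ k1 _ => k1 _ _ hxy.2⟩)
        (fun x y hxy => ⟨hxy.1, fun χ _ k2 => k2 _ _ hxy.2⟩)
end

section
/- Let V be a variety over a finite language with 0⃗ & 1⃗ having the Determining Property. Then the class V_DI of directly indecomposable members of V is axiomatizable by a set of first-order sentences. -/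
open FirstOrder Language

universe u v w

namespace Paper

/-- An algebra is directly indecomposable if it is nontrivial and not isomorphic to
a direct product of two nontrivial algebras. -/
def DirectlyIndecomposable (L : FirstOrder.Language.{v, w}) (A : Type u)
    [L.Structure A] : Prop :=
  Nontrivial A ∧
    ¬∃ (B : Type u) (C : Type u) (_ : L.Structure B) (_ : L.Structure C),
      Nontrivial B ∧ Nontrivial C ∧ Nonempty (A ≃[L] B × C)

end Paper


namespace DIProof

open FirstOrder Language

theorem exists_countable_model {L : FirstOrder.Language.{v, w}} (T : L.Theory)
    (U : Set (L.Formula ℕ))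
    (hfin : ∀ s : Set (L.Formula ℕ), s.Finite → s ⊆ U →
      ∃ (M : Type u) (_ : L.Structure M), Nonempty M ∧ M ⊨ T ∧
        ∃ v : ℕ → M, ∀ φ ∈ s, φ.Realize v)
    (hwit : ∀ τ : L.Formula (ℕ ⊕ Unit), (Formula.iExs Unit τ).not ∈ U ∨
      ∃ n : ℕ, (τ.relabel (Sum.elim id fun _ => n) : L.Formula ℕ) ∈ U) :
    ∃ (M : Type u) (_ : L.Structure M), M ⊨ T ∧
      ∃ v : ℕ → M, Function.Surjective v ∧ ∀ φ ∈ U, φ.Realize v := by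
  classical
  let W : L[[ℕ]].Theory := (L.lhomWithConstants ℕ).onTheory T ∪ Formula.equivSentence '' U
  have hW : W.IsSatisfiable := by
    rw [Theory.isSatisfiable_iff_isFinitelySatisfiable]
    intro W0 hW0
    obtain ⟨M, iM, hne, hT, v, hv⟩ :=
      hfin (Formula.equivSentence ⁻¹' (W0 : Set L[[ℕ]].Sentence) ∩ U)
        ((W0.finite_toSet.preimage (Formula.equivSentence.injective.injOn)).subset
          Set.inter_subset_left) Set.inter_subset_right
    let : (constantsOn ℕ).Structure M := constantsOn.structure v
    have hm : M ⊨ (W0 : L[[ℕ]].Theory) := by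
      refine ⟨fun φ hφ => ?_⟩
      rcases hW0 hφ with h | ⟨ψ, hψ, rfl⟩
      · have : M ⊨ (L.lhomWithConstants ℕ).onTheory T := (LHom.onTheory_model _ _).2 hT
        exact this.realize_of_mem _ h
      · exact (Formula.realize_equivSentence M ψ).2 (hv ψ ⟨hφ, hψ⟩)
    exact Theory.Model.isSatisfiable M
  obtain ⟨N⟩ := hW
  let : L.Structure N := (L.lhomWithConstants ℕ).reduct N
  have hNT : N ⊨ T :=
    (LHom.onTheory_model (L.lhomWithConstants ℕ) T).1
      (Theory.Model.mono N.is_model Set.subset_union_left)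
  let v : ℕ → N := fun n => (L.con n : N)
  have hv : ∀ φ ∈ U, φ.Realize v := fun φ hφ =>
    (Formula.realize_equivSentence N φ).1
      (N.is_model.realize_of_mem _ (Or.inr ⟨φ, hφ, rfl⟩))
  have hw : ∀ (τ : L.Formula (ℕ ⊕ Unit)) (a : N), τ.Realize (Sum.elim v fun _ => a) →
      ∃ n, τ.Realize (Sum.elim v fun _ => v n) := by
    intro τ a ha
    rcases hwit τ with h | ⟨n, h⟩
    · have := hv _ h
      rw [Formula.realize_not, Formula.realize_iExs] at this
      exact absurd ⟨fun _ => a, ha⟩ this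
    · refine ⟨n, ?_⟩
      have := hv _ h
      rw [Formula.realize_relabel] at this
      convert this using 1
      funext x
      rcases x with x | x <;> rfl
  let S : L.Substructure N :=
    { carrier := Set.range v
      fun_mem := by
        intro n f x hx
        choose k hk using hx
        obtain ⟨m, hm⟩ := hw ((Term.func f fun i => Term.var (Sum.inl (k i))).equal
          (Term.var (Sum.inr ()))) (Structure.funMap f x) (by
            simp [Formula.realize_equal, Term.realize, hk])
        refine ⟨m, ?_⟩
        simp [Formula.realize_equal, Term.realize, hk] at hm
        exact hm.symm }
  have hS : S.IsElementary := by
    refine S.isElementary_of_exists ?_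
    intro n φ x a h
    have hx : ∀ i, ∃ k, v k = x i := fun i => (x i).2
    choose k hk using hx
    let τ : L.Formula (ℕ ⊕ Unit) :=
      φ.toFormula.relabel (Sum.elim Empty.elim
        (fun i => Fin.lastCases (Sum.inr ()) (fun j => Sum.inl (k j)) i))
    have key : ∀ b : N, τ.Realize (Sum.elim v fun _ => b) ↔
        φ.Realize default (Fin.snoc ((↑) ∘ x) b : _ → N) := by
      intro b
      rw [Formula.realize_relabel, BoundedFormula.realize_toFormula]
      apply iff_of_eq
      congr 1
      · funext i
        exact i.elim
      · funext i
        refine Fin.lastCases ?_ (fun j => ?_) i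
        · simp
        · simp [hk]
    obtain ⟨m, hm⟩ := hw τ a ((key a).2 h)
    exact ⟨⟨v m, m, rfl⟩, (key _).1 hm⟩
  let S' : L.ElementarySubstructure N := ⟨S, hS⟩
  have hST : S' ⊨ T := inferInstance
  let v' : ℕ → S' := fun n => ⟨v n, n, rfl⟩
  have hv'surj : Function.Surjective v' := by
    rintro ⟨_, n, rfl⟩
    exact ⟨n, rfl⟩
  have hv' : ∀ φ ∈ U, φ.Realize v' := by
    intro φ hφ
    have := hv φ hφ
    rw [← S'.subtype.map_formula φ v']
    exact this
  have : Countable S' := hv'surj.countable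
  have : Small.{u} S' := inferInstance
  let e : S' ≃ Shrink.{u} S' := equivShrink S'
  let iS : L.Structure (Shrink.{u} S') := e.inducedStructure
  let g : S' ≃[L] Shrink.{u} S' := e.inducedStructureEquiv
  refine ⟨Shrink.{u} S', iS, ?_, g ∘ v', g.surjective.comp hv'surj, ?_⟩
  · exact StrongHomClass.theory_model g
  · intro φ hφ
    exact (StrongHomClass.realize_formula g φ).2 (hv' φ hφ)

end DIProof

namespace DIProof

open FirstOrder Language

section Forcing

variable {L : FirstOrder.Language.{v, w}} {L1 : FirstOrder.Language.{v, w}}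

/-- Semantic entailment over models of `T` living in `Type u`. -/
def Ent {γ : Type} (T : L1.Theory) (φ χ : L1.Formula γ) : Prop :=
  ∀ (M : Type u) [L1.Structure M], Nonempty M → M ⊨ T → ∀ v : γ → M, φ.Realize v → χ.Realize v

/-- `φ` and `ψ` are separated by a formula of the smaller language. -/
def Sep {γ : Type} (g : L →ᴸ L1) (T : L1.Theory) (φ ψ : L1.Formula γ) : Prop :=
  ∃ χ : L.Formula γ, Ent.{u} T φ (g.onFormula χ) ∧ Ent.{u} T ψ (g.onFormula χ).not

theorem Sep.symm {γ : Type} {g : L →ᴸ L1} {T : L1.Theory} {φ ψ : L1.Formula γ}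
    (h : Sep.{u} g T φ ψ) : Sep.{u} g T ψ φ := by
  obtain ⟨χ, h1, h2⟩ := h
  refine ⟨χ.not, fun M _ hn hT v hv => h2 M hn hT v hv, fun M _ hn hT v hv => ?_⟩
  have := h1 M hn hT v hv
  have e : g.onFormula χ.not = (g.onFormula χ).not := rfl
  rw [e, Formula.realize_not, Formula.realize_not, not_not]
  exact this

theorem realize_congr_free {γ : Type} {M : Type*} [L1.Structure M] [DecidableEq γ]
    (φ : L1.Formula γ) (v v' : γ → M)
    (h : ∀ a ∈ BoundedFormula.freeVarFinset φ, v a = v' a) : φ.Realize v ↔ φ.Realize v' := by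
  have h1 := BoundedFormula.realize_restrictFreeVar (φ := φ)
    (f := fun a => a) (v := fun a => v a) (xs := default) v (fun a => rfl)
  have h2 := BoundedFormula.realize_restrictFreeVar (φ := φ)
    (f := fun a => a) (v := fun a => v a) (xs := default) v' (fun a => h a a.2)
  exact h1.symm.trans h2

theorem exists_fresh (φ ψ : L1.Formula ℕ) (τ : L1.Formula (ℕ ⊕ Unit)) :
    ∃ n : ℕ, n ∉ BoundedFormula.freeVarFinset φ ∧ n ∉ BoundedFormula.freeVarFinset ψ ∧
      Sum.inl n ∉ BoundedFormula.freeVarFinset τ := by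
  classical
  let s : Set ℕ := (BoundedFormula.freeVarFinset φ : Set ℕ) ∪
    (BoundedFormula.freeVarFinset ψ : Set ℕ) ∪
    Sum.inl ⁻¹' (BoundedFormula.freeVarFinset τ : Set (ℕ ⊕ Unit))
  have hs : s.Finite :=
    ((Finset.finite_toSet _).union (Finset.finite_toSet _)).union
      ((Finset.finite_toSet _).preimage Sum.inl_injective.injOn)
  obtain ⟨n, hn⟩ := hs.exists_notMem
  refine ⟨n, fun h => hn ?_, fun h => hn ?_, fun h => hn ?_⟩
  · exact Or.inl (Or.inl h)
  · exact Or.inl (Or.inr h)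
  · exact Or.inr h

/-- quantify the variable `n` existentially. -/
noncomputable def exVar {L : FirstOrder.Language.{v, w}} (n : ℕ) (χ : L.Formula ℕ) : L.Formula ℕ :=
  Formula.iExs Unit (χ.relabel fun k => if k = n then Sum.inr () else Sum.inl k)

theorem realize_exVar {L : FirstOrder.Language.{v, w}} {M : Type*} [L.Structure M] (n : ℕ)
    (χ : L.Formula ℕ) (v : ℕ → M) :
    (exVar n χ).Realize v ↔ ∃ a, χ.Realize (Function.update v n a) := by
  rw [exVar, Formula.realize_iExs]
  have key : ∀ i : Unit → M, ((fun a => Sum.elim v i a) ∘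
      fun k => if k = n then Sum.inr () else Sum.inl k) = Function.update v n (i ()) := by
    intro i
    funext k
    by_cases h : k = n
    · subst h; simp
    · simp [h]
  constructor
  · rintro ⟨i, hi⟩
    rw [Formula.realize_relabel, key] at hi
    exact ⟨_, hi⟩
  · rintro ⟨a, ha⟩
    refine ⟨fun _ => a, ?_⟩
    rw [Formula.realize_relabel, key]
    exact ha

theorem dense_aux (g : L →ᴸ L1) (T : L1.Theory) (φ ψ : L1.Formula ℕ) (h : ¬ Sep.{u} g T φ ψ)
    (τ : L1.Formula (ℕ ⊕ Unit)) :
    ∃ φ' : L1.Formula ℕ, ¬ Sep.{u} g T φ' ψ ∧ Ent.{u} T φ' φ ∧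
      (Ent.{u} T φ' (Formula.iExs Unit τ).not ∨
        ∃ n : ℕ, Ent.{u} T φ' (τ.relabel (Sum.elim id fun _ => n) : L1.Formula ℕ)) := by
  classical
  by_cases h1 : Sep.{u} g T (φ ⊓ (Formula.iExs Unit τ).not) ψ
  swap
  · exact ⟨_, h1, fun M _ hn hT v hv => (Formula.realize_inf.1 hv).1,
      Or.inl fun M _ hn hT v hv => (Formula.realize_inf.1 hv).2⟩
  obtain ⟨n, hnφ, hnψ, hnτ⟩ := exists_fresh φ ψ τ
  let τn : L1.Formula ℕ := τ.relabel (Sum.elim id fun _ => n)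
  refine ⟨φ ⊓ τn, ?_, fun M _ hn hT v hv => (Formula.realize_inf.1 hv).1,
    Or.inr ⟨n, fun M _ hn hT v hv => (Formula.realize_inf.1 hv).2⟩⟩
  rintro ⟨χ, hχ1, hχ2⟩
  obtain ⟨χ', hχ'1, hχ'2⟩ := h1
  apply h
  have hupd : ∀ {M : Type u} (v : ℕ → M) (a : M) (k : ℕ), k ≠ n →
      v k = Function.update v n a k := fun v a k hk => by simp [hk]
  refine ⟨χ' ⊔ exVar n χ, ?_, ?_⟩
  · intro M _ hn hT v hv
    let := g.reduct M
    rw [LHom.realize_onFormula, Formula.realize_sup, realize_exVar]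
    by_cases hex : (Formula.iExs Unit τ).Realize v
    · right
      rw [Formula.realize_iExs] at hex
      obtain ⟨i, hi⟩ := hex
      refine ⟨i (), ?_⟩
      rw [← LHom.realize_onFormula g]
      refine hχ1 M hn hT _ (Formula.realize_inf.2 ⟨?_, ?_⟩)
      · refine (realize_congr_free φ _ _ ?_).1 hv
        intro k hk
        exact hupd v _ k (fun h => hnφ (h ▸ hk))
      · rw [Formula.realize_relabel]
        refine (realize_congr_free τ _ _ ?_).1 hi
        rintro (k | k) hk
        · exact hupd v _ k (fun h => hnτ (h ▸ hk))
        · simp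
    · left
      rw [← LHom.realize_onFormula g]
      exact hχ'1 M hn hT v (Formula.realize_inf.2 ⟨hv, (Formula.realize_not).2 hex⟩)
  · intro M _ hn hT v hv
    let := g.reduct M
    rw [Formula.realize_not, LHom.realize_onFormula, Formula.realize_sup, realize_exVar]
    rintro (hc | ⟨a, ha⟩)
    · have := hχ'2 M hn hT v hv
      rw [Formula.realize_not, LHom.realize_onFormula] at this
      exact this hc
    · have := hχ2 M hn hT (Function.update v n a) ((realize_congr_free ψ _ _ (fun k hk =>
        hupd v _ k (fun h => hnψ (h ▸ hk)))).1 hv)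
      rw [Formula.realize_not, LHom.realize_onFormula] at this
      exact this ha

/-- Forcing conditions: inseparable pairs. -/
def Cond (g : L →ᴸ L1) (T : L1.Theory) : Type _ :=
  {p : L1.Formula ℕ × L1.Formula ℕ // ¬ Sep.{u} g T p.1 p.2}

instance (g : L →ᴸ L1) (T : L1.Theory) : Preorder (Cond.{u} g T) where
  le p q := Ent.{u} T q.1.1 p.1.1 ∧ Ent.{u} T q.1.2 p.1.2
  le_refl p := ⟨fun _ _ _ _ _ h => h, fun _ _ _ _ _ h => h⟩
  le_trans p q r h h' := ⟨fun M _ a b v hv => h.1 M a b v (h'.1 M a b v hv),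
    fun M _ a b v hv => h.2 M a b v (h'.2 M a b v hv)⟩

/-- The component of a condition. -/
def Cond.side {g : L →ᴸ L1} {T : L1.Theory} (p : Cond.{u} g T) (b : Bool) : L1.Formula ℕ :=
  if b then p.1.1 else p.1.2

theorem Cond.side_mono {g : L →ᴸ L1} {T : L1.Theory} {p q : Cond.{u} g T} (h : p ≤ q) (b : Bool) :
    Ent.{u} T (q.side b) (p.side b) := by
  cases b
  · exact h.2
  · exact h.1

theorem Cond.consistent {g : L →ᴸ L1} {T : L1.Theory} (p : Cond.{u} g T) (b : Bool) :
    ∃ (M : Type u) (_ : L1.Structure M), Nonempty M ∧ M ⊨ T ∧ ∃ v : ℕ → M, (p.side b).Realize v := by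
  by_contra hcon
  push Not at hcon
  apply p.2
  cases b
  · refine ⟨⊤, fun M _ hn hT v hv => ?_, fun M _ hn hT v hv => absurd hv (hcon M _ hn hT v)⟩
    let := g.reduct M
    rw [LHom.realize_onFormula]
    exact Formula.realize_top.2 trivial
  · refine ⟨⊥, fun M _ hn hT v hv => absurd hv (hcon M _ hn hT v), fun M _ hn hT v hv => ?_⟩
    let := g.reduct M
    rw [Formula.realize_not, LHom.realize_onFormula]
    exact fun h => h

/-- The witness-deciding cofinal sets. -/
def dec (g : L →ᴸ L1) (T : L1.Theory) (i : Bool × L1.Formula (ℕ ⊕ Unit)) :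
    Order.Cofinal (Cond.{u} g T) where
  carrier := {p | Ent.{u} T (p.side i.1) (Formula.iExs Unit i.2).not ∨
    ∃ n : ℕ, Ent.{u} T (p.side i.1) (i.2.relabel (Sum.elim id fun _ => n) : L1.Formula ℕ)}
  isCofinal := by
    obtain ⟨b, τ⟩ := i
    rintro ⟨⟨φ, ψ⟩, hp⟩
    cases b
    · obtain ⟨ψ', h1, h2, h3⟩ := dense_aux g T ψ φ (fun h => hp h.symm) τ
      exact ⟨⟨(φ, ψ'), fun h => h1 h.symm⟩, h3, fun _ _ _ _ _ h => h, h2⟩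
    · obtain ⟨φ', h1, h2, h3⟩ := dense_aux g T φ ψ hp τ
      exact ⟨⟨(φ', ψ), h1⟩, h3, h2, fun _ _ _ _ _ h => h⟩

theorem robinson (g : L →ᴸ L1) (T : L1.Theory) [Countable (L1.Formula (ℕ ⊕ Unit))]
    (φ ψ : L1.Formula ℕ) (h : ¬ Sep.{u} g T φ ψ) :
    ∃ (M : Bool → Type u) (_ : ∀ b, L1.Structure (M b)) (v : ∀ b, ℕ → M b),
      (∀ b, M b ⊨ T) ∧ (∀ b, Function.Surjective (v b)) ∧
      φ.Realize (v true) ∧ ψ.Realize (v false) ∧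
      ∀ χ : L.Formula ℕ, (g.onFormula χ).Realize (v true) ↔ (g.onFormula χ).Realize (v false) := by
  classical
  have : Encodable (Bool × L1.Formula (ℕ ⊕ Unit)) := Encodable.ofCountable _
  let p0 : Cond.{u} g T := ⟨(φ, ψ), h⟩
  let G := Order.idealOfCofinals p0 (dec.{u} g T)
  let U : Bool → Set (L1.Formula ℕ) := fun b => {σ | ∃ p ∈ G, Ent.{u} T (p.side b) σ}
  have hU : ∀ b, ∃ (M : Type u) (_ : L1.Structure M), M ⊨ T ∧
      ∃ v : ℕ → M, Function.Surjective v ∧ ∀ φ ∈ U b, φ.Realize v := by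
    intro b
    apply exists_countable_model
    · intro s hs hsU
      have : ∃ p ∈ G, ∀ σ ∈ s, Ent.{u} T (p.side b) σ := by
        induction s, hs using Set.Finite.induction_on with
        | empty => exact ⟨p0, Order.mem_idealOfCofinals _ _, by simp⟩
        | @insert a s _ _ ih =>
          obtain ⟨p, hp, hps⟩ := ih (fun x hx => hsU (Or.inr hx))
          obtain ⟨q, hq, hqa⟩ := hsU (Or.inl rfl : a ∈ insert a s)
          obtain ⟨r, hr, hpr, hqr⟩ := G.directed p hp q hq
          refine ⟨r, hr, ?_⟩
          rintro σ (rfl | hσ)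
          · exact fun M _ hn hT v hv => hqa M hn hT v (Cond.side_mono hqr b M hn hT v hv)
          · exact fun M _ hn hT v hv => hps σ hσ M hn hT v (Cond.side_mono hpr b M hn hT v hv)
      obtain ⟨p, hp, hps⟩ := this
      obtain ⟨M, i, hn, hT, v, hv⟩ := p.consistent b
      exact ⟨M, i, hn, hT, v, fun σ hσ => hps σ hσ M hn hT v hv⟩
    · intro τ
      obtain ⟨p, hp, hpG⟩ := Order.cofinal_meets_idealOfCofinals p0 (dec.{u} g T) (b, τ)
      rcases hp with hp | ⟨n, hp⟩
      · exact Or.inl ⟨p, hpG, hp⟩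
      · exact Or.inr ⟨n, p, hpG, hp⟩
  have hdec : ∀ (b : Bool) (σ : L1.Formula ℕ), σ ∈ U b ∨ σ.not ∈ U b := by
    intro b σ
    obtain ⟨p, hp, hpG⟩ := Order.cofinal_meets_idealOfCofinals p0 (dec.{u} g T)
      (b, σ.relabel Sum.inl)
    rcases hp with hp | ⟨n, hp⟩
    · right
      refine ⟨p, hpG, fun M _ hn hT v hv => ?_⟩
      have := hp M hn hT v hv
      rw [Formula.realize_not, Formula.realize_iExs] at this
      rw [Formula.realize_not]
      intro hσ
      refine this ⟨fun _ => v 0, ?_⟩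
      rw [Formula.realize_relabel]
      exact hσ
    · left
      refine ⟨p, hpG, fun M _ hn hT v hv => ?_⟩
      have := hp M hn hT v hv
      rw [Formula.realize_relabel, Formula.realize_relabel] at this
      exact this
  choose M i hT v hs hv using hU
  refine ⟨M, i, v, hT, hs, hv true _ ⟨p0, Order.mem_idealOfCofinals _ _, fun _ _ _ _ _ h => h⟩,
    hv false _ ⟨p0, Order.mem_idealOfCofinals _ _, fun _ _ _ _ _ h => h⟩, ?_⟩
  intro χ
  have hno : ∀ χ : L.Formula ℕ, g.onFormula χ ∈ U true → (g.onFormula χ).not ∈ U false → False := by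
    rintro χ ⟨p, hp, hp'⟩ ⟨q, hq, hq'⟩
    obtain ⟨r, hr, hpr, hqr⟩ := G.directed p hp q hq
    exact r.2 ⟨χ, fun M _ hn hT v hv => hp' M hn hT v (Cond.side_mono hpr true M hn hT v hv),
      fun M _ hn hT v hv => hq' M hn hT v (Cond.side_mono hqr false M hn hT v hv)⟩
  rcases hdec true (g.onFormula χ) with h1 | h1 <;> rcases hdec false (g.onFormula χ) with h2 | h2
  · exact iff_of_true (hv _ _ h1) (hv _ _ h2)
  · exact (hno χ h1 h2).elim
  · refine (hno χ.not h1 ?_).elim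
    obtain ⟨q, hq, hq'⟩ := h2
    refine ⟨q, hq, fun M _ hn hT v hv => ?_⟩
    have e : g.onFormula χ.not = (g.onFormula χ).not := rfl
    rw [e, Formula.realize_not, Formula.realize_not, not_not]
    exact hq' M hn hT v hv
  · exact iff_of_false (hv _ _ h1) (hv _ _ h2)

end Forcing

end DIProof

namespace DIProof

open FirstOrder Language

section Separation

variable {L : FirstOrder.Language.{v, w}} {L1 : FirstOrder.Language.{v, w}}

theorem model_of_equiv {M N : Type u} [L1.Structure M] [L1.Structure N] (T : L1.Theory)
    (g : M ≃[L1] N) (h : M ⊨ T) : N ⊨ T := StrongHomClass.theory_model g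

theorem realize_of_equiv {M N : Type u} [L1.Structure M] [L1.Structure N] {γ : Type}
    (ψ : L1.Formula γ) (g : M ≃[L1] N) (v : γ → M) (h : ψ.Realize v) : ψ.Realize (g ∘ v) :=
  (StrongHomClass.realize_formula g ψ).2 h

theorem sep_nat (g : L →ᴸ L1) (T : L1.Theory) [Countable (L1.Formula (ℕ ⊕ Unit))]
    (φ ψ : L1.Formula ℕ)
    (hno : ∀ (M : Type u) (iL : L.Structure M) (i1 i2 : L1.Structure M),
      @LHom.IsExpansionOn _ _ g M iL i1 → @LHom.IsExpansionOn _ _ g M iL i2 →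
      @Theory.Model _ M i1 T → @Theory.Model _ M i2 T → Nonempty M → ∀ v : ℕ → M,
      @Formula.Realize _ M i1 _ φ v → @Formula.Realize _ M i2 _ ψ v → False) :
    Sep.{u} g T φ ψ := by
  classical
  by_contra hcon
  obtain ⟨M, i, v, hT, hs, hφ, hψ, hχ⟩ := robinson.{u} g T φ ψ hcon
  let iL : ∀ b, L.Structure (M b) := fun b => g.reduct (M b)
  have hL : ∀ χ : L.Formula ℕ, χ.Realize (v true) ↔ χ.Realize (v false) := by
    intro χ
    rw [← LHom.realize_onFormula g, ← LHom.realize_onFormula g]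
    exact hχ χ
  have heq : ∀ n m, v true n = v true m ↔ v false n = v false m := by
    intro n m
    simpa [Formula.realize_equal] using hL ((Term.var n).equal (Term.var m))
  let s : M true → ℕ := Function.surjInv (hs true)
  have hsv : ∀ a, v true (s a) = a := Function.surjInv_eq (hs true)
  let f : M true → M false := fun a => v false (s a)
  have hf : ∀ n, f (v true n) = v false n := fun n => (heq _ _).1 (hsv _)
  have hbij : Function.Bijective f := by
    constructor
    · intro a b hab
      have := (heq (s a) (s b)).2 hab
      rwa [hsv, hsv] at this
    · intro b
      obtain ⟨n, rfl⟩ := hs false b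
      exact ⟨_, hf n⟩
  let e : M true ≃ M false := Equiv.ofBijective f hbij
  have hev : ∀ n, e (v true n) = v false n := hf
  have hfun : ∀ {n} (F : L.Functions n) (x : Fin n → M true),
      e (Structure.funMap F x) = Structure.funMap F (e ∘ x) := by
    intro n F x
    choose k hk using fun i => hs true (x i)
    obtain ⟨m, hm⟩ := hs true (Structure.funMap F x)
    have h1 := (hL ((Term.func F fun i => Term.var (k i)).equal (Term.var m))).1
      (by simp [Formula.realize_equal, hk, hm])
    simp only [Formula.realize_equal, Term.realize_func, Term.realize_var] at h1
    rw [← hm, hev, ← h1]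
    congr 1
    funext i
    simp only [Function.comp, ← hk, hev]
  have hrel : ∀ {n} (R : L.Relations n) (x : Fin n → M true),
      Structure.RelMap R (e ∘ x) ↔ Structure.RelMap R x := by
    intro n R x
    choose k hk using fun i => hs true (x i)
    have h1 := (hL (R.formula fun i => Term.var (k i)))
    simp only [Formula.realize_rel, Term.realize_var] at h1
    have h2 : x = fun i => v true (k i) := by
      funext i
      exact (hk i).symm
    have h3 : (e ∘ x) = fun i => v false (k i) := by
      funext i
      simp only [Function.comp, ← hk, hev]
    rw [h3, h2]
    exact h1.symm
  have hexp : g.IsExpansionOn (M true) := g.isExpansionOn_reduct _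
  let i2 : L1.Structure (M true) := @Equiv.inducedStructure L1 (M false) (M true) (i false) e.symm
  let ge : @Language.Equiv L1 (M false) (M true) (i false) i2 :=
    @Equiv.inducedStructureEquiv L1 (M false) (M true) (i false) e.symm
  refine hno (M true) (iL true) (i true) i2 hexp ?_ (hT true) ?_
    ⟨v true 0⟩ (v true) hφ ?_
  · refine @LHom.IsExpansionOn.mk L L1 g (M true) (iL true) i2 ?_ ?_
    · intro n F x
      show e.symm (Structure.funMap F (e ∘ x)) = _
      rw [← hfun, Equiv.symm_apply_apply]
    · intro n R x
      exact propext (hrel R x)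
  · exact @model_of_equiv L1 _ _ (i false) i2 T ge (hT false)
  · have h1 := @realize_of_equiv L1 _ _ (i false) i2 _ ψ ge (v false) hψ
    have h2 : (ge ∘ v false) = v true := by
      funext n
      show e.symm (v false n) = _
      rw [← hev, Equiv.symm_apply_apply]
    rw [h2] at h1
    exact h1

theorem sep_of {γ : Type} [Countable γ] [Nonempty γ] (g : L →ᴸ L1) (T : L1.Theory)
    [Countable (L1.Formula (ℕ ⊕ Unit))] (φ ψ : L1.Formula γ)
    (hno : ∀ (M : Type u) (iL : L.Structure M) (i1 i2 : L1.Structure M),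
      @LHom.IsExpansionOn _ _ g M iL i1 → @LHom.IsExpansionOn _ _ g M iL i2 →
      @Theory.Model _ M i1 T → @Theory.Model _ M i2 T → Nonempty M → ∀ v : γ → M,
      @Formula.Realize _ M i1 _ φ v → @Formula.Realize _ M i2 _ ψ v → False) :
    Sep.{u} g T φ ψ := by
  obtain ⟨ι, hι⟩ := Countable.exists_injective_nat γ
  let ρ : ℕ → γ := Function.invFun ι
  have hρ : ∀ a, ρ (ι a) = a := Function.leftInverse_invFun hι
  obtain ⟨χ, h1, h2⟩ := sep_nat.{u} g T (φ.relabel ι) (ψ.relabel ι) (by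
    intro M iL i1 i2 he1 he2 hm1 hm2 hn v hv1 hv2
    refine hno M iL i1 i2 he1 he2 hm1 hm2 hn (v ∘ ι) ?_ ?_
    · exact (@Formula.realize_relabel _ M i1 _ _ φ ι v).1 hv1
    · exact (@Formula.realize_relabel _ M i2 _ _ ψ ι v).1 hv2)
  have hc : ∀ {M : Type u} (v : γ → M), (v ∘ ρ) ∘ ι = v := fun v => by
    funext a; simp [hρ]
  refine ⟨χ.relabel ρ, fun M _ hn hT v hv => ?_, fun M _ hn hT v hv => ?_⟩
  · let := g.reduct M
    rw [LHom.realize_onFormula, Formula.realize_relabel, ← LHom.realize_onFormula g]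
    refine h1 M hn hT _ ?_
    rw [Formula.realize_relabel, hc]
    exact hv
  · let := g.reduct M
    rw [Formula.realize_not, LHom.realize_onFormula, Formula.realize_relabel,
      ← LHom.realize_onFormula g, ← Formula.realize_not]
    refine h2 M hn hT _ ?_
    rw [Formula.realize_relabel, hc]
    exact hv

end Separation

section Good

open Paper

variable {L : FirstOrder.Language.{v, w}} {L1 : FirstOrder.Language.{v, w}} {l : ℕ}

/-- The two relations form a pair of complementary congruences with `e` between. -/
def IsGood {A : Type u} [L.Structure A] (z o : Fin l → L.Term Empty) (r : Bool → A → A → Prop)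
    (e : Fin l → A) : Prop :=
  (∀ b, (∀ a, r b a a) ∧ (∀ a c, r b a c → r b c a) ∧ (∀ a c d, r b a c → r b c d → r b a d) ∧
    ∀ (F : Σ n, L.Functions n) (x y : Fin F.1 → A), (∀ i, r b (x i) (y i)) →
      r b (Structure.funMap F.2 x) (Structure.funMap F.2 y)) ∧
  (∀ a c, r true a c → r false a c → a = c) ∧ (∀ a c, ∃ d, r true a d ∧ r false d c) ∧
  (∀ i, r true (interp A (z i)) (e i)) ∧ ∀ i, r false (e i) (interp A (o i))

theorem isGood_iff {A : Type u} [L.Structure A] (z o : Fin l → L.Term Empty)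
    (r : Bool → A → A → Prop) (e : Fin l → A) :
    IsGood z o r e ↔ ∃ θ θ' : Congruence L A, θ.rel = r true ∧ θ'.rel = r false ∧
      Complementary θ θ' ∧ Between z o θ θ' e := by
  constructor
  · rintro ⟨h, h1, h2, h3, h4⟩
    refine ⟨⟨r true, (h true).1, fun {a c} => (h true).2.1 a c,
      fun {a c d} => (h true).2.2.1 a c d, fun {n} f => (h true).2.2.2 ⟨n, f⟩⟩,
      ⟨r false, (h false).1, fun {a c} => (h false).2.1 a c,
      fun {a c d} => (h false).2.2.1 a c d, fun {n} f => (h false).2.2.2 ⟨n, f⟩⟩,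
      rfl, rfl, ⟨h1, h2⟩, h3, h4⟩
  · rintro ⟨θ, θ', h1, h2, ⟨h3, h4⟩, h5, h6⟩
    have hb : ∀ b, ∃ θ : Congruence L A, θ.rel = r b := by
      rintro (_ | _)
      · exact ⟨θ', h2⟩
      · exact ⟨θ, h1⟩
    refine ⟨?_, h1 ▸ h2 ▸ h3, h1 ▸ h2 ▸ h4, h1 ▸ h5, h2 ▸ h6⟩
    intro b
    obtain ⟨θ, hθ⟩ := hb b
    rw [← hθ]
    exact ⟨θ.refl, fun _ _ => θ.symm, fun _ _ _ => θ.trans, fun F => θ.compat F.2⟩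

/-- A closed term of the small language as a term of the big one. -/
def cterm (g : L →ᴸ L1) {α : Type} (t : L.Term Empty) : L1.Term α :=
  (g.onTerm t).relabel Empty.elim

theorem realize_cterm (g : L →ᴸ L1) {α : Type} (t : L.Term Empty) (A : Type u) [L.Structure A]
    [L1.Structure A] [g.IsExpansionOn A] (v : α → A) :
    (cterm g t : L1.Term α).realize v = interp A t := by
  rw [cterm, Term.realize_relabel, LHom.realize_onTerm, interp]
  congr 1
  funext i
  exact i.elim

/-- Instance of the relation formula. -/
def Rt (R : L1.Formula (Fin 2 ⊕ Fin l)) {β : Type} (s t : L1.Term (Fin l ⊕ β)) :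
    L1.Formula (Fin l ⊕ β) :=
  BoundedFormula.subst R (Sum.elim ![s, t] fun i => Term.var (Sum.inl i))

theorem realize_Rt (R : L1.Formula (Fin 2 ⊕ Fin l)) {β : Type} (s t : L1.Term (Fin l ⊕ β))
    {A : Type u} [L1.Structure A] (e : Fin l → A) (x : β → A) :
    (Rt R s t).Realize (Sum.elim e x) ↔
      R.Realize (Sum.elim ![s.realize (Sum.elim e x), t.realize (Sum.elim e x)] e) := by
  rw [Rt, Formula.Realize, BoundedFormula.realize_subst, Formula.Realize]
  apply iff_of_eq
  congr 1
  funext i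
  rcases i with i | i
  · fin_cases i <;> rfl
  · rfl

theorem good_formula (hF : Finite (Σ n, L.Functions n)) (z o : Fin l → L.Term Empty)
    (g : L →ᴸ L1) (R : Bool → L1.Formula (Fin 2 ⊕ Fin l)) :
    ∃ G : L1.Formula (Fin l), ∀ (A : Type u) [L.Structure A] [L1.Structure A] [g.IsExpansionOn A]
      (e : Fin l → A), G.Realize e ↔
        IsGood z o (fun b x y => (R b).Realize (Sum.elim ![x, y] e)) e := by
  let x {n : ℕ} (i : Fin n) : L1.Term (Fin l ⊕ Fin n) := Term.var (Sum.inr i)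
  let fr (b : Bool) : L1.Formula (Fin l) := Formula.iAlls (Fin 1) (Rt (R b) (x 0) (x 0))
  let fs (b : Bool) : L1.Formula (Fin l) :=
    Formula.iAlls (Fin 2) ((Rt (R b) (x 0) (x 1)).imp (Rt (R b) (x 1) (x 0)))
  let ft (b : Bool) : L1.Formula (Fin l) :=
    Formula.iAlls (Fin 3) ((Rt (R b) (x 0) (x 1)).imp
      ((Rt (R b) (x 1) (x 2)).imp (Rt (R b) (x 0) (x 2))))
  let fc (b : Bool) : L1.Formula (Fin l) :=
    Formula.iInf fun F : (Σ n, L.Functions n) => Formula.iAlls (Fin F.1 ⊕ Fin F.1)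
      ((Formula.iInf fun i : Fin F.1 => Rt (R b) (Term.var (Sum.inr (Sum.inl i)))
          (Term.var (Sum.inr (Sum.inr i)))).imp
        (Rt (R b) (Term.func (g.onFunction F.2) fun i => Term.var (Sum.inr (Sum.inl i)))
          (Term.func (g.onFunction F.2) fun i => Term.var (Sum.inr (Sum.inr i)))))
  let f1 : L1.Formula (Fin l) := Formula.iAlls (Fin 2) ((Rt (R true) (x 0) (x 1)).imp
      ((Rt (R false) (x 0) (x 1)).imp ((x 0).equal (x 1))))
  let f2 : L1.Formula (Fin l) := Formula.iAlls (Fin 2) (Formula.iExs (Fin 1)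
    ((BoundedFormula.subst (Rt (β := Fin 3) (R true) (x 0) (x 2) ⊓ Rt (R false) (x 2) (x 1))
      (Sum.elim (fun i => Term.var (Sum.inl (Sum.inl i)))
        ![Term.var (Sum.inl (Sum.inr 0)), Term.var (Sum.inl (Sum.inr 1)),
          Term.var (Sum.inr 0)])) : L1.Formula ((Fin l ⊕ Fin 2) ⊕ Fin 1)))
  let f3 : L1.Formula (Fin l) := Formula.iInf fun i : Fin l => Formula.iAlls (Fin 1)
    (Rt (R true) (cterm g (z i)) (Term.var (Sum.inl i)))
  let f4 : L1.Formula (Fin l) := Formula.iInf fun i : Fin l => Formula.iAlls (Fin 1)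
    (Rt (R false) (Term.var (Sum.inl i)) (cterm g (o i)))
  refine ⟨(Formula.iInf fun b : Bool => fr b ⊓ (fs b ⊓ (ft b ⊓ fc b))) ⊓
    (f1 ⊓ (f2 ⊓ (f3 ⊓ f4))), ?_⟩
  intro A _ _ _ e
  let r : Bool → A → A → Prop := fun b x y => (R b).Realize (Sum.elim ![x, y] e)
  have hr : ∀ b, (fr b).Realize e ↔ ∀ a, r b a a := by
    intro b
    simp only [fr, Formula.realize_iAlls, realize_Rt, x, Term.realize_var, Sum.elim_inr]
    exact ⟨fun h a => h fun _ => a, fun h i => h (i 0)⟩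
  have hs : ∀ b, (fs b).Realize e ↔ ∀ a c, r b a c → r b c a := by
    intro b
    simp only [fs, Formula.realize_iAlls, Formula.realize_imp, realize_Rt, x, Term.realize_var,
      Sum.elim_inr]
    exact ⟨fun h a c => h ![a, c], fun h i => h (i 0) (i 1)⟩
  have ht : ∀ b, (ft b).Realize e ↔ ∀ a c d, r b a c → r b c d → r b a d := by
    intro b
    simp only [ft, Formula.realize_iAlls, Formula.realize_imp, realize_Rt, x, Term.realize_var,
      Sum.elim_inr]
    exact ⟨fun h a c d => h ![a, c, d], fun h i => h (i 0) (i 1) (i 2)⟩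
  have hc : ∀ b, (fc b).Realize e ↔ ∀ (F : Σ n, L.Functions n) (x y : Fin F.1 → A),
      (∀ i, r b (x i) (y i)) → r b (Structure.funMap F.2 x) (Structure.funMap F.2 y) := by
    intro b
    simp only [fc, Formula.realize_iInf, Formula.realize_iAlls, Formula.realize_imp, realize_Rt,
      Term.realize_var, Sum.elim_inr, Term.realize_func, LHom.map_onFunction]
    exact forall_congr' fun F => ⟨fun h x y => h (Sum.elim x y),
      fun h i => h (fun j => i (Sum.inl j)) (fun j => i (Sum.inr j))⟩
  have h1 : f1.Realize e ↔ ∀ a c, r true a c → r false a c → a = c := by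
    simp only [f1, Formula.realize_iAlls, Formula.realize_imp, realize_Rt, x, Term.realize_var,
      Sum.elim_inr, Formula.realize_equal]
    exact ⟨fun h a c => h ![a, c], fun h i => h (i 0) (i 1)⟩
  have h2 : f2.Realize e ↔ ∀ a c, ∃ d, r true a d ∧ r false d c := by
    have key : ∀ (i : Fin 2 → A) (j : Fin 1 → A),
        Formula.Realize (BoundedFormula.subst (Rt (β := Fin 3) (R true) (x 0) (x 2) ⊓
          Rt (R false) (x 2) (x 1)) (Sum.elim (fun i => Term.var (Sum.inl (Sum.inl i)))
        ![Term.var (Sum.inl (Sum.inr 0)), Term.var (Sum.inl (Sum.inr 1)),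
          Term.var (Sum.inr 0)]) : L1.Formula ((Fin l ⊕ Fin 2) ⊕ Fin 1))
            (Sum.elim (Sum.elim e i) j) ↔ r true (i 0) (j 0) ∧ r false (j 0) (i 1) := by
      intro i j
      rw [Formula.Realize, BoundedFormula.realize_subst, ← Formula.Realize]
      have : (fun a => Term.realize (Sum.elim (Sum.elim e i) j)
          ((Sum.elim (fun i => Term.var (Sum.inl (Sum.inl i)))
        ![Term.var (Sum.inl (Sum.inr 0)), Term.var (Sum.inl (Sum.inr 1)),
          Term.var (Sum.inr 0)] : Fin l ⊕ Fin 3 → L1.Term ((Fin l ⊕ Fin 2) ⊕ Fin 1)) a)) =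
          Sum.elim e ![i 0, i 1, j 0] := by
        funext a
        rcases a with a | a
        · rfl
        · fin_cases a <;> rfl
      rw [this, Formula.realize_inf, realize_Rt, realize_Rt]
      rfl
    simp only [f2, Formula.realize_iAlls, Formula.realize_iExs, key]
    constructor
    · intro h a c
      obtain ⟨j, hj⟩ := h ![a, c]
      exact ⟨j 0, hj⟩
    · intro h i
      obtain ⟨d, hd⟩ := h (i 0) (i 1)
      exact ⟨fun _ => d, hd⟩
  have h3 : f3.Realize e ↔ ∀ i, r true (interp A (z i)) (e i) := by
    simp only [f3, Formula.realize_iInf, Formula.realize_iAlls, realize_Rt, realize_cterm,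
      Term.realize_var, Sum.elim_inl]
    exact ⟨fun h i => h i fun _ => e i, fun h i _ => h i⟩
  have h4 : f4.Realize e ↔ ∀ i, r false (e i) (interp A (o i)) := by
    simp only [f4, Formula.realize_iInf, Formula.realize_iAlls, realize_Rt, realize_cterm,
      Term.realize_var, Sum.elim_inl]
    exact ⟨fun h i => h i fun _ => e i, fun h i _ => h i⟩
  simp only [Formula.realize_inf, Formula.realize_iInf, hr, hs, ht, hc, h1, h2, h3, h4]
  rfl

end Good

end DIProof

namespace DIProof

open FirstOrder Language Paper

/-- Two binary relation symbols. -/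
def relSymbols : ℕ → Type
  | 2 => Bool
  | _ => Empty

/-- The relational language with two binary symbols. -/
def EL : FirstOrder.Language.{0, 0} := ⟨fun _ => Empty, relSymbols⟩

/-- The symbols of `EL`. -/
def esym (b : Bool) : EL.Relations 2 := b

/-- Interpretation of `EL` by a pair of relations. -/
@[reducible] def elStructure {A : Type u} (r : Bool → A → A → Prop) : EL.Structure A where
  funMap f := f.elim
  RelMap {n} := match n with
    | 2 => fun (b : Bool) x => r b (x 0) (x 1)
    | 0 => fun (b : Empty) _ => b.elim
    | 1 => fun (b : Empty) _ => b.elim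
    | (_ + 3) => fun (b : Empty) _ => b.elim

theorem finite_el : Finite (Σ n, EL.Relations n) := by
  apply Finite.of_surjective (fun b : Bool => (⟨2, esym b⟩ : Σ n, EL.Relations n))
  rintro ⟨n, b⟩
  match n, b with
  | 2, b => exact ⟨b, rfl⟩
  | 0, b => exact Empty.elim b
  | 1, b => exact Empty.elim b
  | (_ + 3), b => exact Empty.elim b

theorem countable_formula {L1 : FirstOrder.Language.{v, w}} (h : Countable L1.Symbols)
    (α : Type) [Countable α] : Countable (L1.Formula α) := by
  have h1 := BoundedFormula.card_le (L := L1) (α := α)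
  have h2 : L1.card ≤ Cardinal.aleph0 := Cardinal.mk_le_aleph0_iff.2 h
  have h3 : Cardinal.mk (Σ n, L1.BoundedFormula α n) ≤ Cardinal.aleph0 := by
    refine h1.trans (max_le le_rfl (Cardinal.add_le_aleph0.2 ⟨?_, ?_⟩))
    · rw [Cardinal.lift_le_aleph0]
      exact Cardinal.mk_le_aleph0_iff.2 inferInstance
    · rw [Cardinal.lift_le_aleph0]
      exact h2
  have : Countable (Σ n, L1.BoundedFormula α n) := Cardinal.mk_le_aleph0_iff.1 h3
  exact Function.Injective.countable
    (f := fun φ : L1.Formula α => (⟨0, φ⟩ : Σ n, L1.BoundedFormula α n))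
    (fun a b h => by simpa using h)

variable {L : FirstOrder.Language.{v, w}} {l : ℕ}

theorem det_unique {T : L.Theory} {z o : Fin l → L.Term Empty}
    (hDet : HasDeterminingProperty.{u} z o T) {A : Type u} [L.Structure A] (hA : A ⊨ T)
    (hne : Nonempty A) (r s : Bool → A → A → Prop) (e : Fin l → A) (hr : IsGood z o r e)
    (hs : IsGood z o s e) : r = s := by
  obtain ⟨θ, θ', h1, h2, h3, h4⟩ := (isGood_iff z o r e).1 hr
  obtain ⟨η, η', k1, k2, k3, k4⟩ := (isGood_iff z o s e).1 hs
  obtain ⟨-, d1, d2⟩ := hDet A hA hne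
  have := (d2 e (d1 _ _ _ h3 h4)).unique (y₁ := (θ, θ')) (y₂ := (η, η')) ⟨h3, h4⟩ ⟨k3, k4⟩
  simp only [Prod.mk.injEq] at this
  obtain ⟨rfl, rfl⟩ := this
  funext b
  cases b
  · rw [← h2, k2]
  · rw [← h1, k1]

theorem exists_definition (hfin : Finite L.Symbols) (T : L.Theory) (z o : Fin l → L.Term Empty)
    (hDet : HasDeterminingProperty.{u} z o T) :
    ∃ χ : Bool → L.Formula (Fin 2 ⊕ Fin l), ∀ (A : Type u) [L.Structure A], A ⊨ T → Nonempty A →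
      ∀ (r : Bool → A → A → Prop) (e : Fin l → A), IsGood z o r e →
        ∀ b x y, (χ b).Realize (Sum.elim ![x, y] e) ↔ r b x y := by
  have hF : Finite (Σ n, L.Functions n) := Finite.of_injective
    (fun F => (Sum.inl F : L.Symbols)) Sum.inl_injective
  have hRel : Finite (Σ n, L.Relations n) := Finite.of_injective
    (fun F => (Sum.inr F : L.Symbols)) Sum.inr_injective
  let L1 : FirstOrder.Language.{v, w} := L.sum EL
  let g : L →ᴸ L1 := LHom.sumInl
  have hcount : Countable L1.Symbols := by
    have hE := finite_el
    let t : L1.Symbols → L.Symbols ⊕ Σ n, EL.Relations n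
      | Sum.inl ⟨n, Sum.inl F⟩ => Sum.inl (Sum.inl ⟨n, F⟩)
      | Sum.inl ⟨n, Sum.inr F⟩ => Empty.elim F
      | Sum.inr ⟨n, Sum.inl F⟩ => Sum.inl (Sum.inr ⟨n, F⟩)
      | Sum.inr ⟨n, Sum.inr F⟩ => Sum.inr ⟨n, F⟩
    have ht : Function.LeftInverse (fun s : L.Symbols ⊕ Σ n, EL.Relations n => (match s with
      | Sum.inl (Sum.inl ⟨n, F⟩) => Sum.inl ⟨n, Sum.inl F⟩
      | Sum.inl (Sum.inr ⟨n, F⟩) => Sum.inr ⟨n, Sum.inl F⟩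
      | Sum.inr ⟨n, F⟩ => Sum.inr ⟨n, Sum.inr F⟩ : L1.Symbols)) t := by
      rintro (⟨n, F | F⟩ | ⟨n, F | F⟩)
      · rfl
      · exact Empty.elim F
      · rfl
      · rfl
    exact ht.injective.countable
  have hcf : Countable (L1.Formula (ℕ ⊕ Unit)) := countable_formula hcount _
  let sym (b : Bool) : L1.Relations 2 := Sum.inr (esym b)
  let R (b : Bool) : L1.Formula (Fin 2 ⊕ Fin l) :=
    (sym b).formula₂ (Term.var (Sum.inl 0)) (Term.var (Sum.inl 1))
  have hR : ∀ (b : Bool) (A : Type u) (_ : L1.Structure A) (x y : A) (e : Fin l → A),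
      (R b).Realize (Sum.elim ![x, y] e) ↔ Structure.RelMap (sym b) ![x, y] := by
    intro b A _ x y e
    simp only [R, Formula.realize_rel₂, Term.realize_var]
    rfl
  obtain ⟨G, hG⟩ := good_formula.{u} hF z o g R
  have hsep : ∀ b, Sep.{u} g (g.onTheory T) (G.relabel Sum.inr ⊓ R b)
      (G.relabel Sum.inr ⊓ (R b).not) := by
    intro b
    apply sep_of
    intro M iL i1 i2 he1 he2 hm1 hm2 hn v hv1 hv2
    have hMT : M ⊨ T := (@LHom.onTheory_model _ _ M iL i1 g he1 T).1 hm1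
    have hv : v = Sum.elim ![v (Sum.inl 0), v (Sum.inl 1)] (v ∘ Sum.inr) := by
      funext i
      rcases i with i | i
      · fin_cases i <;> rfl
      · rfl
    have a1 := (@Formula.realize_inf _ M i1 _ _ _ v).1 hv1
    have a2 := (@Formula.realize_inf _ M i2 _ _ _ v).1 hv2
    have b1 := (@hG M iL i1 he1 _).1 ((@Formula.realize_relabel _ M i1 _ _ _ _ v).1 a1.1)
    have b2 := (@hG M iL i2 he2 _).1 ((@Formula.realize_relabel _ M i2 _ _ _ _ v).1 a2.1)
    have hu := det_unique hDet hMT hn _ _ _ b1 b2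
    have hu' := congrFun (congrFun (congrFun hu b) (v (Sum.inl 0))) (v (Sum.inl 1))
    rw [← hv] at hu'
    have c2 := (@Formula.realize_not _ M i2 _ _ v).1 a2.2
    exact c2 (hu' ▸ a1.2)
  choose χ h1 h2 using hsep
  refine ⟨χ, ?_⟩
  intro A iA hA hne r e hr b x y
  let iE : EL.Structure A := elStructure r
  let i1 : L1.Structure A := sumStructure L EL A
  have hexp : g.IsExpansionOn A := LHom.sumInl_isExpansionOn A
  have hm : A ⊨ g.onTheory T := (LHom.onTheory_model g T).2 hA
  have hRr : ∀ b x y, (R b).Realize (Sum.elim ![x, y] e) ↔ r b x y := by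
    intro b x y
    rw [hR]
    exact Iff.rfl
  have hGe : G.Realize e := by
    rw [hG A e]
    have : (fun b x y => (R b).Realize (Sum.elim ![x, y] e)) = r := by
      funext b x y
      exact propext (hRr b x y)
    rw [this]
    exact hr
  have hGe' : (G.relabel Sum.inr : L1.Formula (Fin 2 ⊕ Fin l)).Realize (Sum.elim ![x, y] e) := by
    rw [Formula.realize_relabel]
    exact hGe
  rw [← LHom.realize_onFormula g]
  constructor
  · intro h
    by_contra hcon
    exact h2 b A hne hm _ (Formula.realize_inf.2 ⟨hGe', fun hh => hcon ((hRr b x y).1 hh)⟩) h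
  · intro h
    exact h1 b A hne hm _ (Formula.realize_inf.2 ⟨hGe', (hRr b x y).2 h⟩)

/-- First projection. -/
def fstHom (A B : Type u) [L.Structure A] [L.Structure B] : (A × B) →[L] A where
  toFun := Prod.fst
  map_fun' _ _ := rfl
  map_rel' _ _ h := h.1

/-- Second projection. -/
def sndHom (A B : Type u) [L.Structure A] [L.Structure B] : (A × B) →[L] B where
  toFun := Prod.snd
  map_fun' _ _ := rfl
  map_rel' _ _ h := h.2

theorem hom_interp {A B : Type u} [L.Structure A] [L.Structure B] (f : A →[L] B)
    (t : L.Term Empty) : f (interp A t) = interp B t := by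
  rw [interp, interp, ← HomClass.realize_term f]
  congr 1
  funext i
  exact i.elim

theorem hom_model {A B : Type u} [L.Structure A] [L.Structure B] (f : A →[L] B)
    (hf : Function.Surjective f) {T : L.Theory} (hT : IsEquational T) (hA : A ⊨ T) : B ⊨ T := by
  refine ⟨fun φ hφ => ?_⟩
  have h := hA.realize_of_mem φ hφ
  obtain ⟨n, t₁, t₂, rfl⟩ := hT φ hφ
  rw [Sentence.Realize, BoundedFormula.realize_alls] at h ⊢
  intro xs
  choose ys hys using fun i => hf (xs i)
  have := h ys
  rw [BoundedFormula.realize_bdEqual] at this ⊢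
  have key : ∀ t : L.Term (Empty ⊕ Fin n), t.realize (Sum.elim default xs) =
      f (t.realize (Sum.elim default ys)) := by
    intro t
    rw [← HomClass.realize_term f]
    congr 1
    funext i
    rcases i with i | i
    · exact i.elim
    · exact (hys i).symm
  rw [key, key, this]

/-- Kernel of a homomorphism. -/
def ker {A B : Type u} [L.Structure A] [L.Structure B] (f : A →[L] B) : Congruence L A where
  rel a b := f a = f b
  refl _ := rfl
  symm h := h.symm
  trans h h' := h.trans h'
  compat F x y h := by
    rw [f.map_fun, f.map_fun]
    congr 1
    funext i
    exact h i

end DIProof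

/-- **Corollary 4.3.** If `V` is a variety over a finite language with `0⃗` & `1⃗`
having the Determining Property, then the class `V_DI` of directly indecomposable
members of `V` is axiomatizable by a set of first-order sentences. -/
theorem directlyIndecomposables_axiomatizable {L : FirstOrder.Language.{v, w}}
    (hfin : Finite L.Symbols)
    (T : L.Theory) (hT : Paper.IsEquational T) {l : ℕ} (z o : Fin l → L.Term Empty)
    (h01 : Paper.HasZeroOne.{u} T z o)
    (hDet : Paper.HasDeterminingProperty.{u} z o T) :
    ∃ S : L.Theory,
      ∀ (A : Type u) [L.Structure A], Nonempty A →
        ((A ⊨ T ∧ Paper.DirectlyIndecomposable L A) ↔ A ⊨ S) := by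
  classical
  have hF : Finite (Σ n, L.Functions n) := Finite.of_injective
    (fun F => (Sum.inl F : L.Symbols)) Sum.inl_injective
  obtain ⟨χ, hχ⟩ := DIProof.exists_definition.{u} hfin T z o hDet
  obtain ⟨G, hG⟩ := DIProof.good_formula.{u} hF z o (LHom.id L) χ
  let nt : L.Sentence := Formula.iExs (Fin 2)
    (((Term.var (Sum.inr 0)).equal (Term.var (Sum.inr 1))).not : L.Formula (Empty ⊕ Fin 2))
  let ax : L.Sentence := Formula.iAlls (Fin l)
    (Formula.imp (G.relabel Sum.inr : L.Formula (Empty ⊕ Fin l))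
      ((Formula.iInf fun i : Fin l =>
          (Term.var (Sum.inr i)).equal (DIProof.cterm (LHom.id L) (z i))) ⊔
        (Formula.iInf fun i : Fin l =>
          (Term.var (Sum.inr i)).equal (DIProof.cterm (LHom.id L) (o i)))))
  refine ⟨T ∪ {nt, ax}, ?_⟩
  intro A _ hne
  have hnt : A ⊨ nt ↔ Nontrivial A := by
    simp only [nt, Sentence.Realize, Formula.realize_iExs, Formula.realize_not,
      Formula.realize_equal, Term.realize_var, Sum.elim_inr]
    constructor
    · rintro ⟨i, hi⟩
      exact ⟨_, _, hi⟩
    · rintro ⟨x, y, h⟩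
      exact ⟨![x, y], h⟩
  have hax : A ⊨ ax ↔ ∀ e : Fin l → A, G.Realize e →
      (∀ i, e i = Paper.interp A (z i)) ∨ ∀ i, e i = Paper.interp A (o i) := by
    simp only [ax, Sentence.Realize, Formula.realize_iAlls, Formula.realize_imp,
      Formula.realize_relabel, Formula.realize_sup, Formula.realize_iInf,
      Formula.realize_equal, Term.realize_var, Sum.elim_inr, DIProof.realize_cterm]
    rfl
  have hmod : A ⊨ (T ∪ {nt, ax} : L.Theory) ↔ A ⊨ T ∧ A ⊨ nt ∧ A ⊨ ax := by
    simp only [Theory.model_iff, Set.mem_union, Set.mem_insert_iff, Set.mem_singleton_iff]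
    constructor
    · intro h
      exact ⟨fun φ hφ => h φ (Or.inl hφ), h _ (Or.inr (Or.inl rfl)), h _ (Or.inr (Or.inr rfl))⟩
    · rintro ⟨h1, h2, h3⟩ φ (h | rfl | rfl)
      · exact h1 φ h
      · exact h2
      · exact h3
  rw [hmod, hnt, hax]
  refine and_congr_right fun hA => and_congr_right fun hNT => ?_
  constructor
  · intro hDI e he
    rw [hG A e, DIProof.isGood_iff] at he
    obtain ⟨θ, θ', -, -, hc, hb⟩ := he
    obtain ⟨A₁, A₂, i₁, i₂, g, hg⟩ := (hDet A hA hne).2.1 θ θ' e hc hb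
    have hgt : ∀ t : L.Term Empty,
        g (Paper.interp A t) = (Paper.interp A₁ t, Paper.interp A₂ t) := by
      intro t
      have h0 : g (Paper.interp A t) = Paper.interp (A₁ × A₂) t := DIProof.hom_interp g.toHom t
      rw [h0]
      exact Prod.ext (DIProof.hom_interp (DIProof.fstHom A₁ A₂) t)
        (DIProof.hom_interp (DIProof.sndHom A₁ A₂) t)
    by_cases h1 : Nontrivial A₁
    · by_cases h2 : Nontrivial A₂
      · exact absurd ⟨A₁, A₂, i₁, i₂, h1, h2, ⟨g⟩⟩ hDI
      · left
        intro i
        have := not_nontrivial_iff_subsingleton.1 h2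
        apply g.injective
        rw [hg, hgt]
        exact Prod.ext rfl (Subsingleton.elim _ _)
    · right
      intro i
      have := not_nontrivial_iff_subsingleton.1 h1
      apply g.injective
      rw [hg, hgt]
      exact Prod.ext (Subsingleton.elim _ _) rfl
  · rintro h ⟨B, C, iB, iC, hB, hC, ⟨g⟩⟩
    let f₁ : A →[L] B := (DIProof.fstHom B C).comp g.toHom
    let f₂ : A →[L] C := (DIProof.sndHom B C).comp g.toHom
    have hf₁ : ∀ a, f₁ a = (g a).1 := fun _ => rfl
    have hf₂ : ∀ a, f₂ a = (g a).2 := fun _ => rfl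
    have s₁ : Function.Surjective f₁ := by
      intro b
      obtain ⟨c⟩ := hC.to_nonempty
      refine ⟨g.symm (b, c), ?_⟩
      rw [hf₁, g.apply_symm_apply]
    have s₂ : Function.Surjective f₂ := by
      intro c
      obtain ⟨b⟩ := hB.to_nonempty
      refine ⟨g.symm (b, c), ?_⟩
      rw [hf₂, g.apply_symm_apply]
    have mB : B ⊨ T := DIProof.hom_model f₁ s₁ hT hA
    have mC : C ⊨ T := DIProof.hom_model f₂ s₂ hT hA
    let e : Fin l → A := fun i => g.symm (Paper.interp B (z i), Paper.interp C (o i))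
    have he : ∀ i, g (e i) = (Paper.interp B (z i), Paper.interp C (o i)) :=
      fun i => g.apply_symm_apply _
    let r : Bool → A → A → Prop := fun b => if b then (DIProof.ker f₁).rel else (DIProof.ker f₂).rel
    have hr : DIProof.IsGood z o r e := by
      rw [DIProof.isGood_iff]
      refine ⟨DIProof.ker f₁, DIProof.ker f₂, rfl, rfl, ⟨?_, ?_⟩, ?_, ?_⟩
      · intro a b h1 h2
        exact g.injective (Prod.ext h1 h2)
      · intro a b
        refine ⟨g.symm ((g a).1, (g b).2), ?_, ?_⟩
        · show f₁ _ = f₁ _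
          rw [hf₁, hf₁, g.apply_symm_apply]
        · show f₂ _ = f₂ _
          rw [hf₂, hf₂, g.apply_symm_apply]
      · intro i
        show f₁ _ = f₁ _
        rw [DIProof.hom_interp f₁, hf₁, he]
      · intro i
        show f₂ _ = f₂ _
        rw [DIProof.hom_interp f₂, hf₂, he]
    have hGe : G.Realize e := by
      rw [hG A e]
      have : (fun b x y => (χ b).Realize (Sum.elim ![x, y] e)) = r := by
        funext b x y
        exact propext (hχ A hA hne r e hr b x y)
      rw [this]
      exact hr
    rcases h e hGe with h | h
    · obtain ⟨x, y, hxy⟩ := hC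
      refine hxy (h01 C mC ⟨x⟩ (fun i => ?_) x y)
      rw [← DIProof.hom_interp f₂ (z i), ← h i, hf₂, he]
    · obtain ⟨x, y, hxy⟩ := hB
      refine hxy (h01 B mB ⟨x⟩ (fun i => ?_) x y)
      rw [← DIProof.hom_interp f₁ (o i), ← h i, hf₁, he]
end
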